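/- For every pair of integers 0 ≤ g' ≤ g, there exists a finite connected multigraph G of orientable graph genus exactly g' that admits a cellular embedding in the closed orientable surface of genus g. In the combinatorial model: there exists a rotation system on G whose associated ribbon surface (after capping) has genus g, while the minimum genus over all rotation systems on G equals g'. -/

import Mathlib

/-! The graph is a wedge of the complete bipartite graphs `K_{4,2(g'+1)}` and `K_{2,2(g-g'+1)}`,
identified at one vertex.

For even `M`, `N` the graph `K_{M,N}` has a rotation system all of whose faces are quadrilaterals
(`quadRot`): the rotations at the vertices of each side alternate between `+1` and `-1`. It gives
genus `g'` on the first block and genus `0` on the second. Rotating always by `+1` on the second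
block (`diagRot`) leaves only two faces, which is genus `g - g'`. Wedging two rotation systems
multiplies their disjoint union by one transposition joining two vertices; both the number of
vertices and the number of faces drop by one (`numCycles_swap_mul`), so genera add. This
yields rotation systems of genus `g'` and of genus `g` on the same graph.

For the lower bound, the wedge is simple, bipartite and has no vertex of degree one, so every face
of every rotation system has length at least four and `2 F ≤ E` (`four_mul_numCycles_le`). The wedge
embedding of genus `g'` has `F = E / 2 - 1`, one short of this bound. As `F` changes by an
even amount when the genus changes by an integer, genus below `g'` is impossible. -/

/-- Number of cycles of a permutation of a finite set, counting fixed points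
as cycles of length one. -/
def numCycles {H : Type*} [Fintype H] [DecidableEq H] (σ : Equiv.Perm H) : ℕ :=
  σ.cycleType.card + Fintype.card {x // σ x = x}

/-- The rotation system σ together with the edge involution α determines a
closed oriented surface of genus g via Euler's relation V - E + F = 2 - 2g. -/
def hasGenus {H : Type*} [Fintype H] [DecidableEq H]
    (σ α : Equiv.Perm H) (g : ℕ) : Prop :=
  (numCycles σ : ℤ) - numCycles α + numCycles (σ * α) = 2 - 2 * g

open Equiv

/-! ### Counting cycles -/

theorem eq_of_sameCycle {H T : Type*} {σ : Perm H} {f : H → T}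
    (hf : ∀ a, f (σ a) = f a) {a b : H} (h : σ.SameCycle a b) : f a = f b := by
  have key : ∀ (n : ℕ) (a : H), f ((σ ^ n) a) = f a := by
    intro n
    induction n with
    | zero => simp
    | succ n ih => intro a; rw [pow_succ, Perm.mul_apply, ih, hf]
  obtain ⟨z, rfl⟩ := h
  obtain ⟨n, rfl | rfl⟩ := z.eq_nat_or_neg
  · simp [key]
  · rw [← key n ((σ ^ (-(n : ℤ))) a)]
    simp

/-- An invariant `f` of `σ` separates the cycles of `σ` as soon as every point lies in the cycle
of a representative that depends only on its value under `f`. -/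
theorem sameCycle_iff_of_rep {H T : Type*} {σ : Perm H} {f : H → T} (r : T → H)
    (hf : ∀ a, f (σ a) = f a) (hr : ∀ a, σ.SameCycle a (r (f a))) (a b : H) :
    σ.SameCycle a b ↔ f a = f b :=
  ⟨eq_of_sameCycle hf, fun h => (hr a).trans (h ▸ (hr b).symm)⟩

theorem card_image_congr_ker {A B C : Type*} [DecidableEq B] [DecidableEq C] {s : Finset A}
    {f : A → B} {g : A → C} (h : ∀ a ∈ s, ∀ b ∈ s, (f a = f b ↔ g a = g b)) :
    (s.image f).card = (s.image g).card := by
  have h1 : ((s.image fun a => (f a, g a)).image Prod.fst).card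
      = (s.image fun a => (f a, g a)).card := by
    refine Finset.card_image_of_injOn ?_
    simp only [Set.InjOn, Finset.coe_image, Set.mem_image, Finset.mem_coe]
    rintro _ ⟨a, ha, rfl⟩ _ ⟨b, hb, rfl⟩ hab
    exact Prod.ext hab ((h a ha b hb).1 hab)
  have h2 : ((s.image fun a => (f a, g a)).image Prod.snd).card
      = (s.image fun a => (f a, g a)).card := by
    refine Finset.card_image_of_injOn ?_
    simp only [Set.InjOn, Finset.coe_image, Set.mem_image, Finset.mem_coe]
    rintro _ ⟨a, ha, rfl⟩ _ ⟨b, hb, rfl⟩ hab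
    exact Prod.ext ((h a ha b hb).2 hab) hab
  rw [Finset.image_image] at h1 h2
  exact h1.trans h2.symm

/-- The number of cycles is the number of values of any function whose fibres are the cycles. -/
theorem numCycles_eq {H T : Type*} [Fintype H] [DecidableEq H] [DecidableEq T]
    {σ : Perm H} {f : H → T} (hf : ∀ a b, σ.SameCycle a b ↔ f a = f b) :
    numCycles σ = (Finset.univ.image f).card := by
  have hsplit : Finset.univ.image f =
      σ.support.image f ∪ (Finset.univ.filter (fun x => σ x = x)).image f := by
    rw [← Finset.image_union]
    congr 1
    ext x
    simp [em']
  have hdisj : Disjoint (σ.support.image f)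
      ((Finset.univ.filter (fun x => σ x = x)).image f) := by
    rw [Finset.disjoint_left]
    simp only [Finset.mem_image, Perm.mem_support, Finset.mem_filter, Finset.mem_univ, true_and]
    rintro _ ⟨a, ha, rfl⟩ ⟨b, hb, hab⟩
    have := (hf b a).2 hab
    exact ha (this.apply_eq_self_iff.1 hb)
  have hfix : ((Finset.univ.filter (fun x => σ x = x)).image f).card
      = Fintype.card {x // σ x = x} := by
    rw [Finset.card_image_of_injOn, Fintype.card_subtype]
    intro a ha b hb hab
    have hs := (hf a b).2 hab
    simp only [Finset.coe_filter, Finset.mem_univ, true_and, Set.mem_ofPred_eq] at ha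
    exact hs.eq_of_left ha
  have hcyc : (σ.support.image f).card = σ.cycleType.card := by
    rw [Perm.cycleType_def, Multiset.card_map, ← Finset.card_def]
    have him : σ.support.image (fun a => σ.cycleOf a) = σ.cycleFactorsFinset := by
      ext c
      simp only [Finset.mem_image]
      constructor
      · rintro ⟨a, ha, rfl⟩
        exact Perm.cycleOf_mem_cycleFactorsFinset_iff.2 ha
      · intro hc
        obtain ⟨a, ha⟩ := (Perm.mem_cycleFactorsFinset_iff.1 hc).1.nonempty_support
        exact ⟨a, Perm.mem_cycleFactorsFinset_support_le hc ha,
          (Perm.cycle_is_cycleOf ha hc).symm⟩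
    rw [← him]
    refine card_image_congr_ker fun a ha b hb => ?_
    rw [← hf]
    exact Perm.sameCycle_iff_cycleOf_eq_of_mem_support ha hb
  rw [numCycles, hsplit, Finset.card_union_of_disjoint hdisj, hfix, hcyc]

/-- If every cycle has length at least `L`, there are at most `|H| / L` cycles. -/
theorem mul_numCycles_le {H : Type*} [Fintype H] [DecidableEq H] {φ : Perm H} {L : ℕ} 
    (h1 : 1 < L)
    (h : ∀ j, 0 < j → j < L → ∀ x, (φ ^ j) x ≠ x) : L * numCycles φ ≤ Fintype.card H := by
  have hfix : Fintype.card {x // φ x = x} = 0 := by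
    rw [Fintype.card_eq_zero_iff]
    exact ⟨fun x => h 1 one_pos h1 x.1 (by simpa using x.2)⟩
  have hb : ∀ n ∈ φ.cycleType, L ≤ n := by
    intro n hn
    by_contra! hlt
    have h2 := Perm.two_le_of_mem_cycleType hn
    rw [Perm.cycleType_def, Multiset.mem_map] at hn
    obtain ⟨c, hc, rfl⟩ := hn
    obtain ⟨a, ha⟩ := (Perm.mem_cycleFactorsFinset_iff.1 hc).1.nonempty_support
    have e := Perm.cycle_is_cycleOf ha hc
    have := Perm.pow_mod_card_support_cycleOf_self_apply φ (φ.cycleOf a).support.card a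
    rw [Nat.mod_self, ← e] at this
    exact h _ (lt_of_lt_of_le two_pos h2) hlt a (by simpa using this.symm)
  have := Multiset.card_nsmul_le_sum hb
  rw [Perm.sum_cycleType] at this
  rw [numCycles, hfix, add_zero, mul_comm]
  exact this.trans (Finset.card_le_univ _)

/-- If every cycle length divides `L`, there are at least `|H| / L` cycles. -/
theorem card_le_mul_numCycles {H : Type*} [Fintype H] [DecidableEq H] {φ : Perm H} {L : ℕ}
    (hL : 0 < L) (h : φ ^ L = 1) : Fintype.card H ≤ L * numCycles φ := by
  have hb : ∀ n ∈ φ.cycleType, n ≤ L := fun n hn =>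
    Nat.le_of_dvd hL ((Perm.dvd_of_mem_cycleType hn).trans (orderOf_dvd_of_pow_eq_one h))
  have h1 := Multiset.sum_le_card_nsmul _ _ hb
  rw [Perm.sum_cycleType] at h1
  have h2 : Fintype.card H = φ.support.card + Fintype.card {x // φ x = x} := by
    rw [Fintype.card_subtype, Perm.support, add_comm,
      Finset.card_filter_add_card_filter_not (s := Finset.univ) (p := fun x => φ x = x)]
    rfl
  rw [numCycles, h2, mul_add, mul_comm L φ.cycleType.card]
  exact add_le_add h1 (Nat.le_mul_of_pos_left _ hL)

/-- Multiplying by a transposition of points in different cycles merges these two cycles and leaves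
the others unchanged: the label `f y` is replaced by `f x`. -/
theorem sameCycle_swap_mul {H T : Type*} [Finite H] [DecidableEq H] [DecidableEq T]
    {ρ : Perm H} {f : H → T} (hf : ∀ a b, ρ.SameCycle a b ↔ f a = f b) {x y : H}
    (hxy : f x ≠ f y) (a b : H) :
    (swap x y * ρ).SameCycle a b ↔
      (if f a = f y then f x else f a) = (if f b = f y then f x else f b) := by
  have hfρ : ∀ a, f (ρ a) = f a := fun a => (hf _ _).1 (Perm.sameCycle_apply_left.2 (.refl _ _))
  set τ := swap x y * ρ with hτ
  have hpow : ∀ i : ℕ, (∀ j, 0 < j → j ≤ i → (ρ ^ j) x ≠ x) → (τ ^ i) x = (ρ ^ i) x := by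
    intro i
    induction i with
    | zero => simp
    | succ i ih =>
      intro hi
      have h1 := hi (i + 1) (by omega) le_rfl
      have h2 : (ρ ^ (i + 1)) x ≠ y := by
        intro h
        exact hxy ((hf _ _).1 ⟨(i + 1 : ℕ), h⟩)
      rw [pow_succ', Perm.mul_apply, ih (fun j h0 hj => hi j h0 (by omega)), hτ, Perm.mul_apply,
        ← Perm.mul_apply ρ, ← pow_succ', swap_apply_of_ne_of_ne h1 h2]
  -- `τ` follows the `ρ`-cycle of `x` until it would return to `x`, and then jumps to `y`
  have hτxy : τ.SameCycle x y := by
    have hex : ∃ i, 0 < i ∧ (ρ ^ i) x = x :=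
      ⟨orderOf ρ, orderOf_pos ρ, by simp [pow_orderOf_eq_one]⟩
    classical
    obtain ⟨h0, hfind⟩ := Nat.find_spec hex
    obtain ⟨i, hi⟩ : ∃ i, Nat.find hex = i + 1 := ⟨Nat.find hex - 1, by omega⟩
    have := hpow i (fun j h0 hj h => Nat.find_min hex (m := j) (by omega) ⟨h0, h⟩)
    refine ⟨(i + 1 : ℕ), ?_⟩
    rw [zpow_natCast, pow_succ', Perm.mul_apply, this, hτ, Perm.mul_apply, ← Perm.mul_apply ρ,
      ← pow_succ', ← hi, hfind, swap_apply_left]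
  have hstep : ∀ a, τ.SameCycle a (ρ a) := by
    intro a
    have h1 : τ.SameCycle a (τ a) := Perm.sameCycle_apply_right.2 (.refl _ _)
    by_cases hx : ρ a = x
    · have : τ a = y := by simp [hτ, hx]
      rw [hx]
      exact (this ▸ h1).trans hτxy.symm
    · by_cases hy : ρ a = y
      · have : τ a = x := by simp [hτ, hy]
        rw [hy]
        exact (this ▸ h1).trans hτxy
      · have : τ a = ρ a := by simp [hτ, swap_apply_of_ne_of_ne hx hy]
        rwa [← this]
  have hsame : ∀ a b, f a = f b → τ.SameCycle a b := by
    intro a b hab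
    obtain ⟨n, rfl⟩ := ((hf a b).2 hab).exists_nat_pow_eq
    clear hab
    induction n with
    | zero => exact .refl _ _
    | succ n ih =>
      rw [pow_succ', Perm.mul_apply]
      exact ih.trans (hstep _)
  constructor
  · refine eq_of_sameCycle (f := fun a => if f a = f y then f x else f a) fun a => ?_
    have hfa := hfρ a
    by_cases hx : ρ a = x
    · have : τ a = y := by simp [hτ, hx]
      simp [this, ← hfa, hx]
    · by_cases hy : ρ a = y
      · have : τ a = x := by simp [hτ, hy]
        simp [this, ← hfa, hy]
      · have : τ a = ρ a := by simp [hτ, swap_apply_of_ne_of_ne hx hy]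
        simp [this, hfa]
  · intro h
    split_ifs at h with ha hb hb
    · exact hsame _ _ (ha.trans hb.symm)
    · exact (hsame _ _ ha).trans (hτxy.symm.trans (hsame _ _ h))
    · exact (hsame _ _ h).trans (hτxy.trans (hsame _ _ hb.symm))
    · exact hsame _ _ h

theorem numCycles_swap_mul {H T : Type*} [Fintype H] [DecidableEq H] [DecidableEq T]
    {ρ : Perm H} {f : H → T} (hf : ∀ a b, ρ.SameCycle a b ↔ f a = f b) {x y : H}
    (hxy : f x ≠ f y) : numCycles (swap x y * ρ) + 1 = numCycles ρ := by
  rw [numCycles_eq hf, numCycles_eq (sameCycle_swap_mul hf hxy)]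
  have : (Finset.univ.image fun a => if f a = f y then f x else f a)
      = (Finset.univ.image f).erase (f y) := by
    ext t
    simp only [Finset.mem_image, Finset.mem_univ, true_and, Finset.mem_erase]
    constructor
    · rintro ⟨a, rfl⟩
      split_ifs with h
      · exact ⟨hxy, x, rfl⟩
      · exact ⟨h, a, rfl⟩
    · rintro ⟨h, a, rfl⟩
      exact ⟨a, if_neg h⟩
  rw [this, Finset.card_erase_add_one]
  simp

theorem sameCycle_sumCongr {H₁ H₂ T₁ T₂ : Type*} {σ : Perm H₁} {τ : Perm H₂}
    {f : H₁ → T₁} {g : H₂ → T₂} (hf : ∀ a b, σ.SameCycle a b ↔ f a = f b)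
    (hg : ∀ a b, τ.SameCycle a b ↔ g a = g b) (a b : H₁ ⊕ H₂) :
    (Perm.sumCongr σ τ).SameCycle a b ↔ Sum.map f g a = Sum.map f g b := by
  have hpow : ∀ z : ℤ, Perm.sumCongr σ τ ^ z = Perm.sumCongr (σ ^ z) (τ ^ z) := fun z =>
    (map_zpow (Perm.sumCongrHom H₁ H₂) (σ, τ) z).symm
  have : ∀ a b, (Perm.sumCongr σ τ).SameCycle a b ↔
      ∃ z : ℤ, Perm.sumCongr (σ ^ z) (τ ^ z) a = b := fun a b => by
    simp only [Perm.SameCycle, hpow]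
  rw [this]
  rcases a with a | a <;> rcases b with b | b <;> simp [← hf, ← hg, Perm.SameCycle]

theorem numCycles_sumCongr {H₁ H₂ : Type*} [Fintype H₁] [DecidableEq H₁]
    [Fintype H₂] [DecidableEq H₂] (σ : Perm H₁) (τ : Perm H₂) :
    numCycles (Perm.sumCongr σ τ) = numCycles σ + numCycles τ := by
  classical
  have hq : ∀ {H : Type _} (σ : Perm H) (a b : H), σ.SameCycle a b ↔
      (Quotient.mk (Perm.SameCycle.setoid σ) a) = Quotient.mk (Perm.SameCycle.setoid σ) b :=
    fun σ a b => (Quotient.eq (r := Perm.SameCycle.setoid σ)).symm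
  have hq' : ∀ {H : Type _} (σ : Perm H) (a b : H), σ.SameCycle a b ↔
      (Quotient.mk (Perm.SameCycle.setoid σ) a) = Quotient.mk (Perm.SameCycle.setoid σ) b :=
    fun σ a b => (Quotient.eq (r := Perm.SameCycle.setoid σ)).symm
  rw [numCycles_eq (hq σ), numCycles_eq (hq' τ),
    numCycles_eq (sameCycle_sumCongr (hq σ) (hq' τ)), ← Finset.card_disjSum]
  congr 1
  ext t
  rcases t with t | t <;> simp

/-! ### Rotation systems on complete bipartite graphs -/

/-- The edge involution of the complete bipartite graph on `P` and `Q`. The half-edge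
`(false, p, q)` is the end at `p` of the edge `pq`, and `(true, p, q)` is its end at `q`. -/
def edgeFlip (P Q : Type*) : Perm (Bool × P × Q) :=
  Equiv.prodCongr Equiv.boolNot (Equiv.refl (P × Q))

@[simp] theorem edgeFlip_apply {P Q : Type*} (e : Bool) (p : P) (q : Q) :
    edgeFlip P Q (e, p, q) = (!e, p, q) := rfl

/-- The rotation system on the complete bipartite graph on `P` and `Q` which moves by `s p` around
`p` and by `t q` around `q`. It is transitive at each vertex only if these steps are generators. -/
def bipRot {P Q : Type*} [AddGroup P] [AddGroup Q] (s : P → Q) (t : Q → P) :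
    Perm (Bool × P × Q) where
  toFun
    | (false, p, q) => (false, p, q + s p)
    | (true, p, q) => (true, p + t q, q)
  invFun
    | (false, p, q) => (false, p, q - s p)
    | (true, p, q) => (true, p - t q, q)
  left_inv := by rintro ⟨_ | _, p, q⟩ <;> simp
  right_inv := by rintro ⟨_ | _, p, q⟩ <;> simp

@[simp] theorem bipRot_false {P Q : Type*} [AddGroup P] [AddGroup Q] (s : P → Q) (t : Q → P)
    (p : P) (q : Q) : bipRot s t (false, p, q) = (false, p, q + s p) := rfl

@[simp] theorem bipRot_true {P Q : Type*} [AddGroup P] [AddGroup Q] (s : P → Q) (t : Q → P)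
    (p : P) (q : Q) : bipRot s t (true, p, q) = (true, p + t q, q) := rfl

/-- The vertex carrying a half-edge. -/
def bipVertex {P Q : Type*} : Bool × P × Q → P ⊕ Q
  | (false, p, _) => .inl p
  | (true, _, q) => .inr q

@[simp] theorem bipVertex_false {P Q : Type*} (p : P) (q : Q) :
    bipVertex (false, p, q) = .inl p := rfl

@[simp] theorem bipVertex_true {P Q : Type*} (p : P) (q : Q) :
    bipVertex (true, p, q) = .inr q := rfl

theorem exists_nsmul_unit {N : ℕ} [NeZero N] {u : ZMod N} (hu : u = 1 ∨ u = -1) (x : ZMod N) :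
    ∃ n : ℕ, x + n • u = 0 := by
  rcases hu with rfl | rfl
  · exact ⟨(-x).val, by simp⟩
  · exact ⟨x.val, by simp⟩

theorem sameCycle_bipRot {M N : ℕ} [NeZero M] [NeZero N] {s : ZMod M → ZMod N}
    {t : ZMod N → ZMod M} (hs : ∀ p, s p = 1 ∨ s p = -1) (ht : ∀ q, t q = 1 ∨ t q = -1)
    (a b : Bool × ZMod M × ZMod N) :
    (bipRot s t).SameCycle a b ↔ bipVertex a = bipVertex b := by
  have hF : ∀ (n : ℕ) (p : ZMod M) (q : ZMod N),
      (bipRot s t ^ n) (false, p, q) = (false, p, q + n • s p) := by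
    intro n p q
    induction n with
    | zero => simp
    | succ n ih => rw [pow_succ', Perm.mul_apply, ih, bipRot_false, succ_nsmul, add_assoc]
  have hT : ∀ (n : ℕ) (p : ZMod M) (q : ZMod N),
      (bipRot s t ^ n) (true, p, q) = (true, p + n • t q, q) := by
    intro n p q
    induction n with
    | zero => simp
    | succ n ih => rw [pow_succ', Perm.mul_apply, ih, bipRot_true, succ_nsmul, add_assoc]
  refine sameCycle_iff_of_rep (Sum.elim (fun p => (false, p, 0)) (fun q => (true, 0, q))) ?_ ?_ a b
  · rintro ⟨_ | _, p, q⟩ <;> rfl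
  · rintro ⟨_ | _, p, q⟩
    · obtain ⟨n, hn⟩ := exists_nsmul_unit (hs p) q
      exact ⟨n, by rw [zpow_natCast, hF, hn]; rfl⟩
    · obtain ⟨n, hn⟩ := exists_nsmul_unit (ht q) p
      exact ⟨n, by rw [zpow_natCast, hT, hn]; rfl⟩

theorem numCycles_bipRot {M N : ℕ} [NeZero M] [NeZero N] {s : ZMod M → ZMod N}
    {t : ZMod N → ZMod M} (hs : ∀ p, s p = 1 ∨ s p = -1) (ht : ∀ q, t q = 1 ∨ t q = -1) :
    numCycles (bipRot s t) = M + N := by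
  rw [numCycles_eq (sameCycle_bipRot hs ht), Finset.image_univ_of_surjective]
  · simp [ZMod.card]
  · rintro (p | q)
    · exact ⟨(false, p, 0), rfl⟩
    · exact ⟨(true, 0, q), rfl⟩

theorem two_mul_numCycles {H : Type*} [Fintype H] [DecidableEq H] {α : Perm H}
    (h : ∀ x, α x ≠ x) (hα : α * α = 1) : 2 * numCycles α = Fintype.card H := by
  refine le_antisymm (mul_numCycles_le one_lt_two fun j h0 h2 x => ?_)
    (card_le_mul_numCycles two_pos (by rw [pow_two, hα]))
  obtain rfl : j = 1 := by omega
  simpa using h x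

/-- If the graph is bipartite (with colouring `c`), has no parallel edges and no vertex of degree
one, then all faces have length at least four, so `4 F` is at most the number of half-edges. The
vertices are the fibres of `v`. -/
theorem four_mul_numCycles_le {H T : Type*} [Fintype H] [DecidableEq H] {σ α : Perm H}
    {v : H → T} (c : H → Bool) (hv : ∀ a b, σ.SameCycle a b ↔ v a = v b)
    (hc : ∀ a b, v a = v b → c a = c b) (hα : α * α = 1) (hcα : ∀ a, c (α a) = !c a)
    (hsimple : ∀ a b, v a = v b → v (α a) = v (α b) → a = b)
    (hdeg : ∀ a, ∃ b, b ≠ a ∧ v b = v a) : 4 * numCycles (σ * α) ≤ Fintype.card H := by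
  have hvσ : ∀ a, v (σ a) = v a := fun a => (hv _ _).1 (Perm.sameCycle_apply_left.2 (.refl _ _))
  have hαα : ∀ a, α (α a) = a := fun a => by rw [← Perm.mul_apply, hα, Perm.one_apply]
  have hcφ : ∀ a, c ((σ * α) a) = !c a := fun a => by
    rw [Perm.mul_apply, hc _ _ (hvσ _), hcα]
  refine mul_numCycles_le (by norm_num) fun j h0 h4 x hx => ?_
  obtain rfl | rfl | rfl : j = 1 ∨ j = 2 ∨ j = 3 := by omega
  · have := hcφ x
    rw [pow_one] at hx
    simp [hx] at this
  · rw [pow_two, Perm.mul_apply, Perm.mul_apply, Perm.mul_apply] at hx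
    -- a face of length two bounds two parallel edges, so these coincide
    have h1 : α x = σ (α x) := by
      refine hsimple _ _ (hvσ _).symm ?_
      rw [hαα]
      conv_lhs => rw [← hx]
      exact hvσ _
    obtain ⟨b, hb, hvb⟩ := hdeg (α x)
    exact hb (((hv _ _).2 hvb.symm).eq_of_left h1.symm).symm
  · have := congrArg c hx
    rw [pow_succ, pow_two, Perm.mul_apply, Perm.mul_apply, hcφ, hcφ, hcφ] at this
    simp at this

/-- Reduction modulo `2` on `ZMod (2 * a)`. -/
def parity (a : ℕ) : ZMod (2 * a) →+* ZMod 2 := ZMod.castHom (dvd_mul_right 2 a) (ZMod 2)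

/-- The sign `(-1) ^ c`, as an element of `R`. -/
def altSign {R : Type*} [Ring R] (c : ZMod 2) : R := if c = 0 then 1 else -1

theorem altSign_eq {R : Type*} [Ring R] (c : ZMod 2) :
    altSign c = (1 : R) ∨ altSign c = (-1 : R) := by
  unfold altSign; split_ifs <;> simp

theorem altSign_add_one {R : Type*} [Ring R] (c : ZMod 2) :
    altSign (c + 1) = -(altSign c : R) := by
  have h2 : (1 : ZMod 2) + 1 = 0 := by decide
  obtain rfl | rfl : c = 0 ∨ c = 1 := by revert c; decide
  · simp [altSign]
  · simp [altSign, h2]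

theorem altSign_parity {R : Type*} [Ring R] {a : ℕ} (x : ZMod (2 * a)) (c : ZMod 2) :
    altSign (parity a (x + altSign c)) = -(altSign (parity a x) : R) := by
  rw [← altSign_add_one, map_add]
  congr 2
  rcases altSign_eq (R := ZMod (2 * a)) c with h | h <;> rw [h] <;> simp

theorem altSign_parity_neg {R : Type*} [Ring R] {a : ℕ} (x : ZMod (2 * a)) (c : ZMod 2) :
    altSign (parity a (x + -altSign c)) = -(altSign (parity a x) : R) := by
  rw [← altSign_add_one, altSign_parity]

/-- The rotation system on `K_{2a,2b}` with steps `+1` at even vertices and `-1` at odd vertices. -/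
def quadRot (a b : ℕ) : Perm (Bool × ZMod (2 * a) × ZMod (2 * b)) :=
  bipRot (fun p => altSign (parity a p)) (fun q => altSign (parity b q))

/-- Walking along a face changes the two coordinates alternately. Each unit step flips the parity
of its coordinate and hence the sign of the next step of the other one, so every step is undone two
steps later. -/
theorem quadRot_pow_four (a b : ℕ) :
    (quadRot a b * edgeFlip (ZMod (2 * a)) (ZMod (2 * b))) ^ 4 = 1 := by
  ext1 ⟨e, p, q⟩
  simp only [pow_succ, pow_zero, one_mul, Perm.mul_apply]
  cases e <;> simp [quadRot, altSign_parity, altSign_parity_neg, -map_add]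

theorem bip_simple {P Q : Type*} (a b : Bool × P × Q) (h : bipVertex a = bipVertex b)
    (h' : bipVertex (edgeFlip P Q a) = bipVertex (edgeFlip P Q b)) : a = b := by
  rcases a with ⟨_ | _, p, q⟩ <;> rcases b with ⟨_ | _, p', q'⟩ <;> simp_all

theorem bip_degree {P Q : Type*} [Nontrivial P] [Nontrivial Q] (a : Bool × P × Q) :
    ∃ b, b ≠ a ∧ bipVertex b = bipVertex a := by
  rcases a with ⟨_ | _, p, q⟩
  · obtain ⟨q', h⟩ := exists_ne q
    exact ⟨(false, p, q'), by simpa using h, rfl⟩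
  · obtain ⟨p', h⟩ := exists_ne p
    exact ⟨(true, p', q), by simpa using h, rfl⟩

theorem bip_color {P Q : Type*} (a b : Bool × P × Q) (h : bipVertex a = bipVertex b) :
    a.1 = b.1 := by
  rcases a with ⟨_ | _, p, q⟩ <;> rcases b with ⟨_ | _, p', q'⟩ <;> simp_all

instance nontrivial_zmod_two_mul (a : ℕ) [NeZero a] : Nontrivial (ZMod (2 * a)) :=
  ZMod.nontrivial_iff.2 (by omega)

theorem edgeFlip_mul_self (P Q : Type*) : edgeFlip P Q * edgeFlip P Q = 1 := by
  ext1 ⟨e, p, q⟩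
  simp

theorem card_darts (a b : ℕ) [NeZero a] [NeZero b] :
    Fintype.card (Bool × ZMod (2 * a) × ZMod (2 * b)) = 8 * (a * b) := by
  simp only [Fintype.card_prod, Fintype.card_bool, ZMod.card]
  ring

theorem numCycles_quadRot_face (a b : ℕ) [NeZero a] [NeZero b] :
    numCycles (quadRot a b * edgeFlip (ZMod (2 * a)) (ZMod (2 * b))) = 2 * (a * b) := by
  have h1 := card_le_mul_numCycles four_pos (quadRot_pow_four a b)
  have h2 := four_mul_numCycles_le (σ := quadRot a b) Prod.fst
    (sameCycle_bipRot (fun _ => altSign_eq _) (fun _ => altSign_eq _)) bip_color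
    (edgeFlip_mul_self _ _) (fun a => rfl) bip_simple bip_degree
  rw [card_darts] at h1 h2
  omega

/-- The rotation system on `K_{2,2b}` with step `+1` at every vertex. -/
def diagRot (b : ℕ) : Perm (Bool × ZMod (2 * 1) × ZMod (2 * b)) :=
  bipRot (fun _ => 1) (fun _ => 1)

/-- Two steps along a face translate `(p, q)` by `(1, 1)`; the two faces are told apart by the
parity of `p + q`. -/
theorem numCycles_diagRot_face (b : ℕ) [NeZero b] :
    numCycles (diagRot b * edgeFlip (ZMod (2 * 1)) (ZMod (2 * b))) = 2 := by
  set φ := diagRot b * edgeFlip (ZMod (2 * 1)) (ZMod (2 * b)) with hφ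
  have hF : ∀ p q, φ (false, p, q) = (true, p + 1, q) := fun p q => rfl
  have hT : ∀ p q, φ (true, p, q) = (false, p, q + 1) := fun p q => rfl
  have hstep : ∀ a, φ.SameCycle a (φ a) := fun a => Perm.sameCycle_apply_right.2 (.refl _ _)
  have hn : ∀ (n : ℕ) p q, φ.SameCycle (false, p, q) (false, p + n, q + n) := by
    intro n p q
    induction n with
    | zero => simpa using Perm.SameCycle.refl _ _
    | succ n ih =>
      have h1 := hstep (false, p + n, q + n)
      have h2 := hstep (φ (false, p + n, q + n))
      rw [hF, hT] at h2
      rw [hF] at h1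
      push_cast
      rw [← add_assoc, ← add_assoc]
      exact ih.trans (h1.trans h2)
  -- `ZMod (2 * 1)` and `ZMod 2` are definitionally equal, and `parity 1` is the identity
  let f : Bool × ZMod (2 * 1) × ZMod (2 * b) → ZMod 2
    | (false, p, q) => parity 1 p + parity b q
    | (true, p, q) => parity 1 p + parity b q + 1
  have hinj : ∀ p : ZMod (2 * 1), (parity 1 p : ZMod (2 * 1)) = p := by decide
  have hFrep : ∀ p q, φ.SameCycle (false, p, q) (false, f (false, p, q), 0) := by
    intro p q
    have h := hn (-q).val p q
    have e : p + ((-q).val : ZMod (2 * 1)) = f (false, p, q) := by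
      have : ((-q).val : ZMod 2) = parity b (-q) := by
        conv_rhs => rw [← ZMod.natCast_zmod_val (-q), map_natCast]
      change p + ((-q).val : ZMod 2) = parity 1 p + parity b q
      rw [this, map_neg, ZMod.neg_eq_self_mod_two]
      congr 1
      exact (hinj p).symm
    rw [e] at h
    simpa using h
  have hfφ : ∀ a, f (φ a) = f a := by
    rintro ⟨_ | _, p, q⟩
    · rw [hF]
      simp only [f, map_add, map_one]
      have := CharTwo.add_self_eq_zero (1 : ZMod 2)
      linear_combination this
    · rw [hT]
      simp only [f, map_add, map_one]
      ring
  have hsc : ∀ a b, φ.SameCycle a b ↔ f a = f b := by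
    refine sameCycle_iff_of_rep (fun t => (false, t, 0)) hfφ ?_
    rintro ⟨_ | _, p, q⟩
    · exact hFrep p q
    · have h := hstep (true, p, q)
      rw [← hfφ (true, p, q), hT]
      rw [hT] at h
      exact h.trans (hFrep _ _)
  rw [numCycles_eq hsc, Finset.image_univ_of_surjective]
  · simp [ZMod.card]
  · intro t
    exact ⟨(false, t, 0), by simp only [f, map_zero, add_zero]; exact hinj t⟩

/-! ### Wedges of two complete bipartite graphs -/

/-- The half-edges of the wedge of `K_{2a,2b}` and `K_{2a',2b'}`. -/
abbrev WedgeDart (a b a₂ b₂ : ℕ) : Type :=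
  (Bool × ZMod (2 * a) × ZMod (2 * b)) ⊕ (Bool × ZMod (2 * a₂) × ZMod (2 * b₂))

/-- The edge involution of the wedge. -/
def wedgeFlip (a b a₂ b₂ : ℕ) : Perm (WedgeDart a b a₂ b₂) :=
  Perm.sumCongr (edgeFlip _ _) (edgeFlip _ _)

/-- The wedge of two rotation systems: the transposition splices the cycles at the vertices
`0 : ZMod (2 * a)` and `0 : ZMod (2 * a₂)` into one. -/
def wedgeRot {a b a₂ b₂ : ℕ} (σ : Perm (Bool × ZMod (2 * a) × ZMod (2 * b)))
    (τ : Perm (Bool × ZMod (2 * a₂) × ZMod (2 * b₂))) : Perm (WedgeDart a b a₂ b₂) :=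
  swap (.inl (false, 0, 0)) (.inr (false, 0, 0)) * Perm.sumCongr σ τ

/-- The vertex of the wedge carrying a half-edge; the vertex `0 : ZMod (2 * a₂)` of the second
block is replaced by the vertex `0 : ZMod (2 * a)` of the first. -/
def wedgeVertex {a b a₂ b₂ : ℕ} (x : WedgeDart a b a₂ b₂) :
    (ZMod (2 * a) ⊕ ZMod (2 * b)) ⊕ (ZMod (2 * a₂) ⊕ ZMod (2 * b₂)) :=
  if Sum.map bipVertex bipVertex x = .inr (.inl 0) then .inl (.inl 0)
  else Sum.map bipVertex bipVertex x

section
variable {a b a₂ b₂ : ℕ}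

theorem wedgeFlip_ne (x : WedgeDart a b a₂ b₂) : wedgeFlip a b a₂ b₂ x ≠ x := by
  rcases x with ⟨e, p, q⟩ | ⟨e, p, q⟩ <;> simp [wedgeFlip]

theorem wedgeFlip_mul_self : wedgeFlip a b a₂ b₂ * wedgeFlip a b a₂ b₂ = 1 := by
  rw [wedgeFlip, Perm.sumCongr_mul, edgeFlip_mul_self, edgeFlip_mul_self, Perm.sumCongr_one]

variable [NeZero a] [NeZero b] [NeZero a₂] [NeZero b₂]
  {σ : Perm (Bool × ZMod (2 * a) × ZMod (2 * b))}
  {τ : Perm (Bool × ZMod (2 * a₂) × ZMod (2 * b₂))}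

theorem sameCycle_wedgeRot (hσ : ∀ x y, σ.SameCycle x y ↔ bipVertex x = bipVertex y)
    (hτ : ∀ x y, τ.SameCycle x y ↔ bipVertex x = bipVertex y) (x y : WedgeDart a b a₂ b₂) :
    (wedgeRot σ τ).SameCycle x y ↔ wedgeVertex x = wedgeVertex y :=
  sameCycle_swap_mul (sameCycle_sumCongr hσ hτ) (by simp) x y

theorem numCycles_wedgeRot (hσ : ∀ x y, σ.SameCycle x y ↔ bipVertex x = bipVertex y)
    (hτ : ∀ x y, τ.SameCycle x y ↔ bipVertex x = bipVertex y) :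
    numCycles (wedgeRot σ τ) + 1 = numCycles σ + numCycles τ := by
  rw [← numCycles_sumCongr]
  exact numCycles_swap_mul (sameCycle_sumCongr hσ hτ) (by simp)

theorem numCycles_wedgeRot_face (σ : Perm (Bool × ZMod (2 * a) × ZMod (2 * b)))
    (τ : Perm (Bool × ZMod (2 * a₂) × ZMod (2 * b₂))) :
    numCycles (wedgeRot σ τ * wedgeFlip a b a₂ b₂) + 1 =
      numCycles (σ * edgeFlip _ _) + numCycles (τ * edgeFlip _ _) := by
  classical
  -- the transposed points also lie in different cycles of the face permutation of the disjoint union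
  rw [← numCycles_sumCongr, wedgeRot, wedgeFlip, mul_assoc, Perm.sumCongr_mul]
  have hq : ∀ {H : Type} (σ : Perm H) (a b : H), σ.SameCycle a b ↔
      Quotient.mk (Perm.SameCycle.setoid σ) a = Quotient.mk (Perm.SameCycle.setoid σ) b :=
    fun σ a b => (Quotient.eq (r := Perm.SameCycle.setoid σ)).symm
  exact numCycles_swap_mul (sameCycle_sumCongr (hq _) (hq _)) (by simp)

theorem card_wedgeDart : Fintype.card (WedgeDart a b a₂ b₂) = 8 * (a * b) + 8 * (a₂ * b₂) := by
  rw [Fintype.card_sum, card_darts, card_darts]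

theorem wedge_face_bound {ρ : Perm (WedgeDart a b a₂ b₂)}
    (hρ : ∀ x y, ρ.SameCycle x y ↔ wedgeVertex x = wedgeVertex y) :
    4 * numCycles (ρ * wedgeFlip a b a₂ b₂) ≤ 8 * (a * b) + 8 * (a₂ * b₂) := by
  rw [← card_wedgeDart]
  refine four_mul_numCycles_le (Sum.elim Prod.fst Prod.fst) hρ ?_ wedgeFlip_mul_self ?_ ?_ ?_
  · rintro (⟨_ | _, p, q⟩ | ⟨_ | _, p, q⟩) (⟨_ | _, p', q'⟩ | ⟨_ | _, p', q'⟩) <;>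
      simp [wedgeVertex] <;> split_ifs <;> simp
  · rintro (⟨e, p, q⟩ | ⟨e, p, q⟩) <;> simp [wedgeFlip]
  · rintro (⟨_ | _, p, q⟩ | ⟨_ | _, p, q⟩) (⟨_ | _, p', q'⟩ | ⟨_ | _, p', q'⟩) <;>
      simp [wedgeVertex, wedgeFlip] <;> (try split_ifs) <;> simp_all
  · rintro (x | x)
    · obtain ⟨y, hy, hv⟩ := bip_degree x
      exact ⟨.inl y, by simpa using hy, by simp [wedgeVertex, hv]⟩
    · obtain ⟨y, hy, hv⟩ := bip_degree x
      exact ⟨.inr y, by simpa using hy, by simp [wedgeVertex, hv]⟩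

theorem wedge_connected {ρ : Perm (WedgeDart a b a₂ b₂)}
    (hρ : ∀ x y, ρ.SameCycle x y ↔ wedgeVertex x = wedgeVertex y) (x y : WedgeDart a b a₂ b₂) :
    Relation.EqvGen (fun u v => ρ u = v ∨ wedgeFlip a b a₂ b₂ u = v) x y := by
  set R := Relation.EqvGen (fun u v => ρ u = v ∨ wedgeFlip a b a₂ b₂ u = v) with hR
  have htrans : ∀ {u v w}, R u v → R v w → R u w := fun h h' => .trans _ _ _ h h'
  have hflip : ∀ u, R u (wedgeFlip a b a₂ b₂ u) := fun u => .rel _ _ (.inr rfl)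
  have hvert : ∀ u v, wedgeVertex u = wedgeVertex v → R u v := by
    intro u v h
    obtain ⟨n, rfl⟩ := ((hρ u v).2 h).exists_nat_pow_eq
    clear h
    induction n with
    | zero => exact .refl _
    | succ n ih =>
      rw [pow_succ', Perm.mul_apply]
      exact htrans ih (.rel _ _ (.inl rfl))
  have hlF : ∀ p q, R (.inl (false, p, q)) (.inl (false, 0, 0)) := fun p q =>
    htrans (hflip _) <| htrans (hvert _ (.inl (true, 0, q)) (by simp [wedgeVertex, wedgeFlip])) <|
      htrans (hflip _) (hvert _ _ (by simp [wedgeVertex, wedgeFlip]))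
  have hrF : ∀ p q, R (.inr (false, p, q)) (.inl (false, 0, 0)) := fun p q =>
    htrans (hflip _) <| htrans (hvert _ (.inr (true, 0, q)) (by simp [wedgeVertex, wedgeFlip])) <|
      htrans (hflip _) (hvert _ _ (by simp [wedgeVertex, wedgeFlip]))
  have hbase : ∀ u, R u (.inl (false, 0, 0)) := by
    rintro (⟨_ | _, p, q⟩ | ⟨_ | _, p, q⟩)
    · exact hlF p q
    · exact htrans (hflip _) (hlF p q)
    · exact hrF p q
    · exact htrans (hflip _) (hrF p q)
  exact htrans (hbase x) (.symm _ _ (hbase y))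

end

/-- For every 0 ≤ g' ≤ g there exists a finite connected multigraph (encoded by
a half-edge set H, an edge involution α and a vertex rotation σ) carrying a
rotation system of genus exactly g, while the minimum genus over all rotation
systems with the same vertex partition (i.e. the orientable graph genus) is g'. -/
theorem stmt_8 (g' g : ℕ) (h : g' ≤ g) :
    ∃ (H : Type) (i1 : Fintype H) (i2 : DecidableEq H) (σ α : Equiv.Perm H),
      (∀ x, α x ≠ x) ∧ α * α = 1 ∧
      (∀ x y : H, Relation.EqvGen (fun a b => σ a = b ∨ α a = b) x y) ∧
      @hasGenus H i1 i2 σ α g ∧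
      IsLeast {n : ℕ | ∃ σ' : Equiv.Perm H,
          (∀ x y, σ'.SameCycle x y ↔ σ.SameCycle x y) ∧
          @hasGenus H i1 i2 σ' α n} g' := by
  obtain ⟨d, rfl⟩ := Nat.exists_eq_add_of_le h
  have hQ : ∀ (a b : ℕ) [NeZero a] [NeZero b] (x y),
      (quadRot a b).SameCycle x y ↔ bipVertex x = bipVertex y := fun a b _ _ =>
    sameCycle_bipRot (fun _ => altSign_eq _) (fun _ => altSign_eq _)
  have hD : ∀ x y, (diagRot (d + 1)).SameCycle x y ↔ bipVertex x = bipVertex y :=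
    sameCycle_bipRot (fun _ => .inl rfl) (fun _ => .inl rfl)
  have nQ : ∀ (a b : ℕ) [NeZero a] [NeZero b], numCycles (quadRot a b) = 2 * a + 2 * b :=
    fun a b _ _ => numCycles_bipRot (fun _ => altSign_eq _) (fun _ => altSign_eq _)
  have nD : numCycles (diagRot (d + 1)) = 2 * 1 + 2 * (d + 1) :=
    numCycles_bipRot (fun _ => .inl rfl) (fun _ => .inl rfl)
  set σ := wedgeRot (quadRot 2 (g' + 1)) (diagRot (d + 1)) with hσ
  set σ₀ := wedgeRot (quadRot 2 (g' + 1)) (quadRot 1 (d + 1)) with hσ₀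
  set α := wedgeFlip 2 (g' + 1) 1 (d + 1) with hα
  have hsc : ∀ x y, σ.SameCycle x y ↔ wedgeVertex x = wedgeVertex y :=
    sameCycle_wedgeRot (hQ _ _) hD
  have hsc₀ : ∀ x y, σ₀.SameCycle x y ↔ wedgeVertex x = wedgeVertex y :=
    sameCycle_wedgeRot (hQ _ _) (hQ _ _)
  have hV : numCycles σ + 1 = _ := numCycles_wedgeRot (hQ _ _) hD
  have hV₀ : numCycles σ₀ + 1 = _ := numCycles_wedgeRot (hQ _ _) (hQ _ _)
  have hE : 2 * numCycles α = _ := two_mul_numCycles wedgeFlip_ne wedgeFlip_mul_self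
  have hF : numCycles (σ * α) + 1 = _ := numCycles_wedgeRot_face _ _
  have hF₀ : numCycles (σ₀ * α) + 1 = _ := numCycles_wedgeRot_face _ _
  rw [nQ, nD] at hV
  rw [nQ, nQ] at hV₀
  rw [card_wedgeDart] at hE
  rw [numCycles_quadRot_face, numCycles_diagRot_face] at hF
  rw [numCycles_quadRot_face, numCycles_quadRot_face] at hF₀
  refine ⟨_, inferInstance, inferInstance, σ, α, wedgeFlip_ne, wedgeFlip_mul_self,
    wedge_connected hsc, ?_, ⟨σ₀, fun x y => (hsc₀ x y).trans (hsc x y).symm, ?_⟩, ?_⟩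
  · unfold hasGenus
    push_cast
    omega
  · unfold hasGenus
    omega
  · rintro n ⟨σ', hσ', hn⟩
    have hsc' : ∀ x y, σ'.SameCycle x y ↔ wedgeVertex x = wedgeVertex y := fun x y =>
      (hσ' x y).trans (hsc x y)
    have hFle := wedge_face_bound hsc'
    have hV' : numCycles σ' = numCycles σ := by rw [numCycles_eq hsc', numCycles_eq hsc]
    unfold hasGenus at hn
    rw [hV'] at hn
    rw [← hα] at hFle
    -- the bounds only give `2 * n ≥ 2 * g' - 1`; since `n` is an integer, `n ≥ g'` follows
    omega
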